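/- arXiv:1302.1782 — 2 statements merged into one kernel-verified Lean document; each statement's English description precedes it below -/
import Mathlib

section
/- Let 𝒞 be a small category, (−⊗I) elementary homotopy data on Psh(𝒞), and T a monad on Psh(𝒞) (with unit η and multiplication μ) satisfying (M1)–(M3). A map f : X → Y is a T-weak equivalence if and only if Tf : TX → TY is a homotopy equivalence admitting a homotopy inverse f̄ : TY → TX which is a homomorphism of (free) T-algebras, i.e., there exists f̄ : TY → TX with f̄ ∘ μ_Y = μ_X ∘ T(f̄), f̄ ∘ Tf ≃* id_{TX}, and Tf ∘ f̄ ≃* id_{TY}. -/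
/-!
Suppose every unit `η_Z` is a `T`-weak equivalence. By two-out-of-three applied to
`η_X ≫ Tf = f ≫ η_Y`, the maps `f` and `Tf` are `T`-weak equivalences together, and a homotopy
equivalence is one. Conversely, if `f` is a `T`-weak equivalence, then `η_X : X ⟶ TX` factors up
to homotopy as `f ≫ g`; the homomorphism `f̄ : TY ⟶ TX` extending `g` is a left homotopy inverse of
`Tf`, because maps out of `TX` into an algebra are detected by `η_X`, and a right one, because `Tf`
is itself a `T`-weak equivalence.

That `η_Z` is a `T`-weak equivalence amounts to extending maps and homotopies from `Z` to `TZ`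
with values in a naively fibrant `A`. Both are left lifting properties, the second one against the
path object map `R A ⟶ A ⨯ A`, where `R` is right adjoint to the cylinder; so it suffices to have
them for the generators of the saturated class.
-/

open CategoryTheory Category Limits

universe w v u

/-- The category of presheaves on a small category. -/
abbrev Psh (C : Type u) [SmallCategory C] := Cᵒᵖ ⥤ Type u

namespace PaperMSMonad

/-- `f` is a retract of `g` in the arrow category. -/
def IsRetractOf {D : Type*} [Category D] {X Y Z W : D} (f : X ⟶ Y) (g : Z ⟶ W) : Prop :=
  ∃ (i : X ⟶ Z) (r : Z ⟶ X) (i' : Y ⟶ W) (r' : W ⟶ Y),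
    i ≫ r = 𝟙 X ∧ i' ≫ r' = 𝟙 Y ∧ i ≫ g = f ≫ i' ∧ g ≫ r' = r ≫ f

/-- The cocone on the restriction of `F : J ⥤ D` to `Set.Iio j`, with point `F.obj j`. -/
@[simps]
def coconeLT {D : Type*} [Category D] {J : Type w} [Preorder J] (F : J ⥤ D) (j : J) :
    Cocone ((Monotone.functor (f := (Subtype.val : Set.Iio j → J))
      (fun _ _ h => h)) ⋙ F) where
  pt := F.obj j
  ι :=
    { app := fun i => F.map (homOfLE i.2.le)
      naturality := fun i i' g => by
        dsimp [Monotone.functor]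
        rw [Category.comp_id, ← F.map_comp]
        rfl }

/-- A morphism property is stable under transfinite composition if, for every well-ordered
type `J`, every functor `F : J ⥤ D` which is continuous at limit stages and whose successor
maps all lie in `W`, and every colimit cocone on `F`, the component of the cocone at the
bottom element lies in `W`. -/
def StableUnderTransfiniteComposition {D : Type*} [Category D]
    (W : MorphismProperty D) : Prop :=
  ∀ (J : Type w) (_ : LinearOrder J) (_ : SuccOrder J) (_ : OrderBot J) (_ : WellFoundedLT J)
    (F : J ⥤ D),
    (∀ (j : J), ¬IsMax j → W (F.map (homOfLE (Order.le_succ j)))) →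
    (∀ (j : J), Order.IsSuccLimit j → Nonempty (IsColimit (coconeLT F j))) →
    ∀ (c : Cocone F), Nonempty (IsColimit c) → W (c.ι.app ⊥)

/-- A class of morphisms is weakly saturated if it contains all isomorphisms and is closed
under pushout (cobase change), retracts and transfinite composition. -/
def IsWeaklySaturated {D : Type*} [Category D] (W : MorphismProperty D) : Prop :=
  (∀ ⦃X Y : D⦄ (f : X ⟶ Y), IsIso f → W f) ∧
  (∀ ⦃Z X Y P : D⦄ (t : Z ⟶ X) (f : Z ⟶ Y) (g : X ⟶ P) (b : Y ⟶ P),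
      IsPushout t f g b → W f → W g) ∧
  (∀ ⦃X Y Z W' : D⦄ (f : X ⟶ Y) (g : Z ⟶ W'), IsRetractOf f g → W g → W f) ∧
  StableUnderTransfiniteComposition.{w} W

/-- The saturated class generated by `S`: the smallest weakly saturated class containing `S`. -/
def SaturatedClassGen {D : Type*} [Category D] (S : MorphismProperty D) :
    MorphismProperty D :=
  fun _ _ f => ∀ W : MorphismProperty D, IsWeaklySaturated.{w} W → S ≤ W → W f

/-- The maps having the right lifting property with respect to all maps in `S`. -/
def RLP {D : Type*} [Category D] (S : MorphismProperty D) : MorphismProperty D :=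
  fun _ _ g => ∀ ⦃A B : D⦄ (f : A ⟶ B), S f → HasLiftingProperty f g

/-- The maps having the left lifting property with respect to all maps in `S`. -/
def LLP {D : Type*} [Category D] (S : MorphismProperty D) : MorphismProperty D :=
  fun _ _ f => ∀ ⦃A B : D⦄ (g : A ⟶ B), S g → HasLiftingProperty f g

end PaperMSMonad

namespace PaperMSMonad

variable {C : Type u} [SmallCategory C]

/-- Elementary homotopy data on the category of presheaves on `C`: a functorial cylinder
`X ↦ X ⊗ I` with endpoint inclusions `∂⁰`, `∂¹` and projection `σ`, such that
`[∂⁰,∂¹] : X + X → X ⊗ I` is always a monomorphism, the cylinder functor preserves small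
colimits and monomorphisms, and the endpoint naturality squares at monomorphisms
are pullbacks. -/
structure ElementaryHomotopyData (C : Type u) [SmallCategory C] where
  cyl : Psh C ⥤ Psh C
  d0 : 𝟭 (Psh C) ⟶ cyl
  d1 : 𝟭 (Psh C) ⟶ cyl
  σ : cyl ⟶ 𝟭 (Psh C)
  d0_σ : ∀ X : Psh C, d0.app X ≫ σ.app X = 𝟙 X
  d1_σ : ∀ X : Psh C, d1.app X ≫ σ.app X = 𝟙 X
  mono_pair : ∀ X : Psh C, Mono (coprod.desc (d0.app X) (d1.app X))
  preservesColimits : PreservesColimitsOfSize.{u, u} cyl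
  preservesMono : ∀ ⦃K L : Psh C⦄ (j : K ⟶ L), Mono j → Mono (cyl.map j)
  isPullback0 : ∀ ⦃K L : Psh C⦄ (j : K ⟶ L), Mono j →
    IsPullback j (d0.app K) (d0.app L) (cyl.map j)
  isPullback1 : ∀ ⦃K L : Psh C⦄ (j : K ⟶ L), Mono j →
    IsPullback j (d1.app K) (d1.app L) (cyl.map j)

namespace ElementaryHomotopyData

variable (E : ElementaryHomotopyData C)

/-- `f ≃ g`: there is a homotopy `θ : X ⊗ I ⟶ Y` from `f` to `g`. -/
def Htpy {X Y : Psh C} (f g : X ⟶ Y) : Prop :=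
  ∃ θ : E.cyl.obj X ⟶ Y, E.d0.app X ≫ θ = f ∧ E.d1.app X ≫ θ = g

/-- `f ≃* g`: the equivalence relation generated by the homotopy relation. -/
def HtpyStar {X Y : Psh C} (f g : X ⟶ Y) : Prop :=
  Relation.EqvGen (fun a b : X ⟶ Y => E.Htpy a b) f g

/-- `[X,Y]`: the quotient of `Hom(X,Y)` by the equivalence relation generated by homotopy. -/
def HQ (X Y : Psh C) :=
  Quot (fun a b : X ⟶ Y => E.Htpy a b)

/-- The class of `f : X ⟶ Y` in `[X,Y]`. -/
def HQ.mk {X Y : Psh C} (f : X ⟶ Y) : E.HQ X Y :=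
  Quot.mk _ f

/-- `[f,A] : [Y,A] → [X,A]`, precomposition with `f` on homotopy classes. -/
def precomp {X Y A : Psh C} (f : X ⟶ Y) : E.HQ Y A → E.HQ X A :=
  Quot.lift (fun h => HQ.mk E (f ≫ h)) (fun h h' hh => Quot.sound (by
    obtain ⟨θ, h0, h1⟩ := hh
    exact ⟨E.cyl.map f ≫ θ,
      by rw [← Category.assoc, ← E.d0.naturality, Functor.id_map, Category.assoc, h0],
      by rw [← Category.assoc, ← E.d1.naturality, Functor.id_map, Category.assoc, h1]⟩))

/-- For a monomorphism `j : K ⟶ L` the canonical map `K⊗I ∪ L⊗{0} ⟶ L⊗I`. -/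
noncomputable def gluing0 {K L : Psh C} (j : K ⟶ L) :
    pushout (E.d0.app K) j ⟶ E.cyl.obj L :=
  pushout.desc (E.cyl.map j) (E.d0.app L) (by rw [← E.d0.naturality j]; rfl)

/-- For a monomorphism `j : K ⟶ L` the canonical map `K⊗I ∪ L⊗{1} ⟶ L⊗I`. -/
noncomputable def gluing1 {K L : Psh C} (j : K ⟶ L) :
    pushout (E.d1.app K) j ⟶ E.cyl.obj L :=
  pushout.desc (E.cyl.map j) (E.d1.app L) (by rw [← E.d1.naturality j]; rfl)

/-- For a map `j : K ⟶ L` the canonical map `K⊗I ∪ L⊗∂I ⟶ L⊗I`. -/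
noncomputable def gluingBoth {K L : Psh C} (j : K ⟶ L) :
    pushout (coprod.desc (E.d0.app K) (E.d1.app K)) (coprod.map j j) ⟶ E.cyl.obj L :=
  pushout.desc (E.cyl.map j) (coprod.desc (E.d0.app L) (E.d1.app L)) (by
    apply coprod.hom_ext
    · rw [coprod.inl_desc_assoc, coprod.inl_map_assoc, coprod.inl_desc]
      exact (E.d0.naturality j).symm
    · rw [coprod.inr_desc_assoc, coprod.inr_map_assoc, coprod.inr_desc]
      exact (E.d1.naturality j).symm)

/-- The class `Λ⁰_I(S)`. -/
inductive Lambda0 (E : ElementaryHomotopyData C) (S : MorphismProperty (Psh C)) :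
    ∀ ⦃X Y : Psh C⦄, (X ⟶ Y) → Prop
  | ofS ⦃X Y : Psh C⦄ (f : X ⟶ Y) : S f → Lambda0 E S f
  | glue0 ⦃K L : Psh C⦄ (j : K ⟶ L) : Mono j → Lambda0 E S (E.gluing0 j)
  | glue1 ⦃K L : Psh C⦄ (j : K ⟶ L) : Mono j → Lambda0 E S (E.gluing1 j)

/-- The operation `𝚲(-)` applied to a class of maps. -/
inductive LambdaStep (E : ElementaryHomotopyData C) (P : MorphismProperty (Psh C)) :
    ∀ ⦃X Y : Psh C⦄, (X ⟶ Y) → Prop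
  | glue ⦃K L : Psh C⦄ (j : K ⟶ L) : P j → LambdaStep E P (E.gluingBoth j)

/-- The class `Λⁿ_I(S)`. -/
def LambdaN (S : MorphismProperty (Psh C)) : ℕ → MorphismProperty (Psh C)
  | 0 => Lambda0 E S
  | (n + 1) => LambdaStep E (LambdaN S n)

/-- The class `Λ_I(S) = ⋃ₙ Λⁿ_I(S)`. -/
def Lambda (S : MorphismProperty (Psh C)) : MorphismProperty (Psh C) :=
  fun _ _ f => ∃ n : ℕ, LambdaN E S n f

/-- The class `𝔄_I(S)` of anodyne extensions: maps with the left lifting property with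
respect to every map having the right lifting property with respect to `Λ_I(S)`. -/
def Anodyne (S : MorphismProperty (Psh C)) : MorphismProperty (Psh C) :=
  LLP (RLP (E.Lambda S))

/-- `A` is naively fibrant if `A ⟶ 1` has the right lifting property with respect to all
anodyne extensions. -/
def NaivelyFibrant (S : MorphismProperty (Psh C)) (A : Psh C) : Prop :=
  RLP (E.Anodyne S) (terminal.from A)

/-- A map `f : X ⟶ Y` is a `T`-weak equivalence if `[f,A] : [Y,A] → [X,A]` is a bijection
for every `T`-algebra `A`. -/
def TWeakEquiv (T : Monad (Psh C)) : MorphismProperty (Psh C) :=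
  fun _ _ f => ∀ A : T.Algebra, Function.Bijective (E.precomp (A := A.A) f)

end ElementaryHomotopyData

/-- The generating set of units `𝔊 = {η_{Gⁱ} : Gⁱ ⟶ T(Gⁱ)}`. -/
inductive unitsOf (T : Monad (Psh C)) {ι : Type u} (G : ι → Psh C) :
    ∀ ⦃X Y : Psh C⦄, (X ⟶ Y) → Prop
  | mk (i : ι) : unitsOf T G (T.η.app (G i))

end PaperMSMonad

namespace PaperMSMonad

open CategoryTheory Category Limits

lemma IsRetractOf.nonempty_retractArrow {D : Type*} [Category D] {X Y Z W : D}
    {f : X ⟶ Y} {g : Z ⟶ W} (h : IsRetractOf f g) : Nonempty (RetractArrow f g) := by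
  obtain ⟨i, r, i', r', hi, hi', hleft, hright⟩ := h
  exact ⟨{ i := Arrow.homMk i i' hleft
           r := Arrow.homMk r r' hright.symm
           retract := Arrow.hom_ext _ _ hi hi' }⟩

lemma isWeaklySaturated_llp {D : Type*} [Category D] (W : MorphismProperty D) :
    IsWeaklySaturated.{w} W.llp := by
  refine ⟨fun _ _ f _ => W.llp.of_isIso f, fun _ _ _ _ _ _ _ _ sq => W.llp.of_isPushout sq,
    fun _ _ _ _ _ _ hfg => W.llp.of_retract hfg.nonempty_retractArrow.some, ?_⟩
  intro J _ _ _ _ F hsucc hlim c ⟨hc⟩ _ _ p hp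
  have : F.IsWellOrderContinuous := ⟨hlim⟩
  exact HasLiftingProperty.transfiniteComposition.hasLiftingProperty_ι_app_bot
    (hc := hc) fun j hj => hsucc j hj p hp

lemma saturatedClassGen_le_llp_rlp {D : Type*} [Category D] (S : MorphismProperty D) :
    SaturatedClassGen.{w} S ≤ S.rlp.llp :=
  fun _ _ _ hf => hf _ (isWeaklySaturated_llp _) S.le_llp_rlp

lemma exists_comp_eq_of_hasLiftingProperty_terminal {D : Type*} [Category D] [HasTerminal D]
    {A K L : D} (j : K ⟶ L) [HasLiftingProperty j (terminal.from A)] (g : K ⟶ A) :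
    ∃ h : L ⟶ A, j ≫ h = g := by
  have sq : CommSq g j (terminal.from A) (terminal.from L) := ⟨terminal.hom_ext _ _⟩
  exact ⟨sq.lift, sq.fac_left⟩

lemma homEquiv_comp_app_comp_counit {D : Type*} [Category D] {F R : D ⥤ D} (adj : F ⊣ R)
    (d : 𝟭 D ⟶ F) {A L : D} (θ : F.obj L ⟶ A) :
    adj.homEquiv L A θ ≫ d.app (R.obj A) ≫ adj.counit.app A = d.app L ≫ θ := by
  have hθ : F.map (adj.homEquiv L A θ) ≫ adj.counit.app A = θ :=
    (adj.homEquiv_counit L A _).symm.trans ((adj.homEquiv L A).symm_apply_apply θ)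
  exact (d.naturality_assoc (adj.homEquiv L A θ) (adj.counit.app A)).trans (d.app L ≫= hθ)

lemma exists_freeAlgebraHom_extension {D : Type*} [Category D] (T : Monad D) {X Y : D}
    (g : Y ⟶ T.obj X) :
    ∃ fbar : T.obj Y ⟶ T.obj X, T.μ.app Y ≫ fbar = T.map fbar ≫ T.μ.app X ∧
      T.η.app Y ≫ fbar = g := by
  refine ⟨T.map g ≫ T.μ.app X, ?_, ?_⟩
  · rw [← T.μ.naturality_assoc, Functor.map_comp, assoc, T.assoc, Functor.comp_map]
  · rw [← T.η.naturality_assoc, T.left_unit, comp_id, Functor.id_map]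

namespace ElementaryHomotopyData

variable {C : Type u} [SmallCategory C] {E : ElementaryHomotopyData C}

section Homotopy

variable {X Y Z A : Psh C}

lemma Htpy.refl (f : X ⟶ Y) : E.Htpy f f :=
  ⟨E.σ.app X ≫ f, (reassoc_of% E.d0_σ X) f, (reassoc_of% E.d1_σ X) f⟩

lemma Htpy.postcomp {f g : X ⟶ Y} (H : E.Htpy f g) (h : Y ⟶ Z) : E.Htpy (f ≫ h) (g ≫ h) := by
  obtain ⟨θ, h0, h1⟩ := H
  exact ⟨θ ≫ h, by rw [← assoc, h0], by rw [← assoc, h1]⟩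

lemma HQ.mk_eq_mk_iff {f g : X ⟶ Y} : HQ.mk E f = HQ.mk E g ↔ E.HtpyStar f g :=
  Quot.eq

lemma HtpyStar.postcomp {f g : X ⟶ Y} (H : E.HtpyStar f g) (h : Y ⟶ Z) :
    E.HtpyStar (f ≫ h) (g ≫ h) :=
  HQ.mk_eq_mk_iff.1 <|
    congrArg (Quot.map (· ≫ h) fun _ _ H' => Htpy.postcomp H' h) (HQ.mk_eq_mk_iff.2 H)

lemma precomp_id : E.precomp (A := A) (𝟙 X) = id := by
  funext q
  induction q using Quot.ind with | mk h => exact congrArg (HQ.mk E) (id_comp h)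

lemma precomp_comp (f : X ⟶ Y) (g : Y ⟶ Z) :
    E.precomp (A := A) (f ≫ g) = E.precomp f ∘ E.precomp g := by
  funext q
  induction q using Quot.ind with | mk h => exact congrArg (HQ.mk E) (assoc f g h)

lemma HtpyStar.precomp_eq {f g : X ⟶ Y} (H : E.HtpyStar f g) :
    E.precomp (A := A) f = E.precomp g := by
  funext q
  induction q using Quot.ind with | mk h => exact HQ.mk_eq_mk_iff.2 (H.postcomp h)

lemma htpyStar_of_injective_precomp {f : X ⟶ Y} (hf : Function.Injective (E.precomp (A := A) f))
    {h h' : Y ⟶ A} (H : E.HtpyStar (f ≫ h) (f ≫ h')) : E.HtpyStar h h' :=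
  HQ.mk_eq_mk_iff.1 (hf (HQ.mk_eq_mk_iff.2 H))

lemma exists_htpyStar_of_surjective_precomp {f : X ⟶ Y}
    (hf : Function.Surjective (E.precomp (A := A) f)) (g : X ⟶ A) :
    ∃ h : Y ⟶ A, E.HtpyStar (f ≫ h) g := by
  obtain ⟨⟨h⟩, hh⟩ := hf (HQ.mk E g)
  exact ⟨h, HQ.mk_eq_mk_iff.1 hh⟩

lemma bijective_precomp_of_htpyStar_id {f : X ⟶ Y} {g : Y ⟶ X}
    (hfg : E.HtpyStar (f ≫ g) (𝟙 X)) (hgf : E.HtpyStar (g ≫ f) (𝟙 Y)) :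
    Function.Bijective (E.precomp (A := A) f) := by
  have hleft : E.precomp (A := A) g ∘ E.precomp f = id := by
    rw [← precomp_comp, hgf.precomp_eq, precomp_id]
  have hright : E.precomp (A := A) f ∘ E.precomp g = id := by
    rw [← precomp_comp, hfg.precomp_eq, precomp_id]
  exact Function.bijective_iff_has_inverse.2 ⟨E.precomp g, congrFun hleft, congrFun hright⟩

lemma bijective_precomp_of_extension {f : X ⟶ Y} (hext : ∀ g : X ⟶ A, ∃ h : Y ⟶ A, f ≫ h = g)
    (hhtpy : ∀ h h' : Y ⟶ A, E.Htpy (f ≫ h) (f ≫ h') → E.Htpy h h') :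
    Function.Bijective (E.precomp (A := A) f) := by
  choose ext comp_ext using hext
  refine Function.bijective_iff_has_inverse.2 ⟨Quot.map ext fun g g' H => ?_, ?_, ?_⟩
  · apply hhtpy
    rwa [comp_ext, comp_ext]
  · rintro ⟨h⟩
    refine Quot.sound (hhtpy _ _ ?_)
    rw [comp_ext]
    exact .refl _
  · rintro ⟨g⟩
    exact congrArg (HQ.mk E) (comp_ext g)

end Homotopy

section NaivelyFibrant

variable {R : Psh C ⥤ Psh C} (adj : E.cyl ⊣ R) {A K L : Psh C}

/-- The map `⟨ev₀, ev₁⟩ : Aᴵ ⟶ A ⨯ A`, where the path object `Aᴵ` is the value at `A` of a right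
adjoint `R` of the cylinder functor. Lifting against it is extension of homotopies with prescribed
ends. -/
noncomputable def pathEndpoints (A : Psh C) : R.obj A ⟶ A ⨯ A :=
  prod.lift (E.d0.app (R.obj A) ≫ adj.counit.app A) (E.d1.app (R.obj A) ≫ adj.counit.app A)

lemma homEquiv_comp_pathEndpoints_fst (θ : E.cyl.obj L ⟶ A) :
    adj.homEquiv L A θ ≫ pathEndpoints adj A ≫ prod.fst = E.d0.app L ≫ θ := by
  rw [pathEndpoints, prod.lift_fst, homEquiv_comp_app_comp_counit]

lemma homEquiv_comp_pathEndpoints_snd (θ : E.cyl.obj L ⟶ A) :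
    adj.homEquiv L A θ ≫ pathEndpoints adj A ≫ prod.snd = E.d1.app L ≫ θ := by
  rw [pathEndpoints, prod.lift_snd, homEquiv_comp_app_comp_counit]

lemma exists_homotopy_extension (j : K ⟶ L)
    [HasLiftingProperty (E.gluingBoth j) (terminal.from A)] {h h' : L ⟶ A} {θ : E.cyl.obj K ⟶ A}
    (h0 : E.d0.app K ≫ θ = j ≫ h) (h1 : E.d1.app K ≫ θ = j ≫ h') :
    ∃ ψ : E.cyl.obj L ⟶ A,
      E.cyl.map j ≫ ψ = θ ∧ E.d0.app L ≫ ψ = h ∧ E.d1.app L ≫ ψ = h' := by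
  have hcompat : coprod.desc (E.d0.app K) (E.d1.app K) ≫ θ =
      coprod.map j j ≫ coprod.desc h h' := by
    apply coprod.hom_ext
    · rw [coprod.inl_desc_assoc, coprod.inl_map_assoc, coprod.inl_desc]
      exact h0
    · rw [coprod.inr_desc_assoc, coprod.inr_map_assoc, coprod.inr_desc]
      exact h1
  obtain ⟨ψ, hψ⟩ := exists_comp_eq_of_hasLiftingProperty_terminal (E.gluingBoth j)
    (pushout.desc θ (coprod.desc h h') hcompat)
  have hcyl := pushout.inl _ _ ≫= hψ
  have hends := pushout.inr _ _ ≫= hψ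
  rw [gluingBoth, pushout.inl_desc_assoc, pushout.inl_desc] at hcyl
  rw [gluingBoth, pushout.inr_desc_assoc, pushout.inr_desc] at hends
  have hψ0 := coprod.inl ≫= hends
  have hψ1 := coprod.inr ≫= hends
  rw [coprod.inl_desc_assoc, coprod.inl_desc] at hψ0
  rw [coprod.inr_desc_assoc, coprod.inr_desc] at hψ1
  exact ⟨ψ, hcyl, hψ0, hψ1⟩

lemma hasLiftingProperty_pathEndpoints (j : K ⟶ L)
    [HasLiftingProperty (E.gluingBoth j) (terminal.from A)] :
    HasLiftingProperty j (pathEndpoints adj A) := by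
  refine ⟨fun {a b} sq => ?_⟩
  obtain ⟨θ, rfl⟩ := (adj.homEquiv K A).surjective a
  have h0 : E.d0.app K ≫ θ = j ≫ b ≫ prod.fst := by
    rw [← homEquiv_comp_pathEndpoints_fst adj, sq.w_assoc]
  have h1 : E.d1.app K ≫ θ = j ≫ b ≫ prod.snd := by
    rw [← homEquiv_comp_pathEndpoints_snd adj, sq.w_assoc]
  obtain ⟨ψ, hcyl, hψ0, hψ1⟩ := exists_homotopy_extension j h0 h1
  refine ⟨⟨⟨adj.homEquiv L A ψ, ?_, ?_⟩⟩⟩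
  · rw [← adj.homEquiv_naturality_left, hcyl]
  · apply Limits.prod.hom_ext
    · rw [assoc, homEquiv_comp_pathEndpoints_fst, hψ0]
    · rw [assoc, homEquiv_comp_pathEndpoints_snd, hψ1]

lemma Htpy.of_hasLiftingProperty_pathEndpoints {j : K ⟶ L}
    [HasLiftingProperty j (pathEndpoints adj A)] {h h' : L ⟶ A}
    (H : E.Htpy (j ≫ h) (j ≫ h')) : E.Htpy h h' := by
  obtain ⟨θ, h0, h1⟩ := H
  have sq : CommSq (adj.homEquiv K A θ) j (pathEndpoints adj A) (prod.lift h h') := by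
    constructor
    apply Limits.prod.hom_ext
    · rw [assoc, homEquiv_comp_pathEndpoints_fst, h0, assoc, prod.lift_fst]
    · rw [assoc, homEquiv_comp_pathEndpoints_snd, h1, assoc, prod.lift_snd]
  obtain ⟨ψ, hψ⟩ := (adj.homEquiv L A).surjective sq.lift
  refine ⟨ψ, ?_, ?_⟩
  · rw [← homEquiv_comp_pathEndpoints_fst adj, hψ, sq.fac_right_assoc, prod.lift_fst]
  · rw [← homEquiv_comp_pathEndpoints_snd adj, hψ, sq.fac_right_assoc, prod.lift_snd]

variable {S : MorphismProperty (Psh C)}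

lemma NaivelyFibrant.hasLiftingProperty (hA : E.NaivelyFibrant S A) {j : K ⟶ L}
    (hj : E.Lambda S j) : HasLiftingProperty j (terminal.from A) :=
  hA j fun _ _ _ hg => hg j hj

lemma NaivelyFibrant.bijective_precomp (hA : E.NaivelyFibrant S A) {j : K ⟶ L}
    (hj : SaturatedClassGen.{w} S j) : Function.Bijective (E.precomp (A := A) j) := by
  have hj_llp := saturatedClassGen_le_llp_rlp S j hj
  have := E.preservesColimits
  have := Presheaf.isLeftAdjoint_of_preservesColimits.{u} E.cyl
  let adj := Adjunction.ofIsLeftAdjoint E.cyl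
  have hterminal : S.rlp (terminal.from A) := fun _ _ i hi =>
    hA.hasLiftingProperty ⟨0, .ofS i hi⟩
  have hpath : S.rlp (pathEndpoints adj A) := fun _ _ i hi => by
    have := hA.hasLiftingProperty ⟨1, .glue i (.ofS i hi)⟩
    exact hasLiftingProperty_pathEndpoints adj i
  have := hj_llp _ hterminal
  have := hj_llp _ hpath
  exact bijective_precomp_of_extension (exists_comp_eq_of_hasLiftingProperty_terminal j)
    fun _ _ => .of_hasLiftingProperty_pathEndpoints adj

end NaivelyFibrant

section TWeakEquiv

variable {T : Monad (Psh C)} {X Y : Psh C}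

instance : (E.TWeakEquiv T).HasTwoOutOfThreeProperty where
  comp_mem f g hf hg A := by
    rw [precomp_comp]
    exact (hf A).comp (hg A)
  of_postcomp f g hg hfg A := by
    have hfgA := hfg A
    rwa [precomp_comp, Function.Bijective.of_comp_iff _ (hg A)] at hfgA
  of_precomp f g hf hfg A := by
    have hfgA := hfg A
    rwa [precomp_comp, Function.Bijective.of_comp_iff' (hf A)] at hfgA

lemma TWeakEquiv.bijective_precomp_free {f : X ⟶ Y} (hf : E.TWeakEquiv T f) (Z : Psh C) :
    Function.Bijective (E.precomp (A := T.obj Z) f) :=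
  hf (T.free.obj Z)

lemma tWeakEquiv_map_iff (hη : ∀ Z, E.TWeakEquiv T (T.η.app Z)) (f : X ⟶ Y) :
    E.TWeakEquiv T (T.map f) ↔ E.TWeakEquiv T f := by
  rw [← (E.TWeakEquiv T).precomp_iff _ (T.map f) (hη X), ← T.η.naturality f,
    (E.TWeakEquiv T).postcomp_iff _ _ (hη Y), Functor.id_map]

lemma TWeakEquiv.exists_freeAlgebraHom_homotopyInverse
    (hη : ∀ Z, E.TWeakEquiv T (T.η.app Z)) {f : X ⟶ Y} (hf : E.TWeakEquiv T f) :
    ∃ fbar : T.obj Y ⟶ T.obj X,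
      T.μ.app Y ≫ fbar = T.map fbar ≫ T.μ.app X ∧
      E.HtpyStar (T.map f ≫ fbar) (𝟙 (T.obj X)) ∧
      E.HtpyStar (fbar ≫ T.map f) (𝟙 (T.obj Y)) := by
  obtain ⟨g, hg⟩ : ∃ g : Y ⟶ T.obj X, E.HtpyStar (f ≫ g) (T.η.app X) :=
    exists_htpyStar_of_surjective_precomp (hf.bijective_precomp_free X).surjective (T.η.app X)
  obtain ⟨fbar, hom, hext⟩ := exists_freeAlgebraHom_extension T g
  have hnat : T.η.app X ≫ T.map f ≫ fbar = f ≫ g := by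
    rw [← T.η.naturality_assoc f fbar, hext, Functor.id_map]
  have hleft : E.HtpyStar (T.map f ≫ fbar) (𝟙 (T.obj X)) := by
    apply htpyStar_of_injective_precomp ((hη X).bijective_precomp_free X).injective
    rwa [hnat, comp_id]
  have hTf := (tWeakEquiv_map_iff hη f).2 hf
  refine ⟨fbar, hom, hleft,
    htpyStar_of_injective_precomp (hTf.bijective_precomp_free Y).injective ?_⟩
  rw [← assoc, comp_id, ← id_comp (T.map f)]
  exact hleft.postcomp (T.map f)

end TWeakEquiv

end ElementaryHomotopyData

theorem tWeakEquiv_iff_homotopyEquivalence_general {C : Type u} [SmallCategory C]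
    {E : ElementaryHomotopyData C} {T : Monad (Psh C)}
    (hη : ∀ Z, E.TWeakEquiv T (T.η.app Z)) {X Y : Psh C} (f : X ⟶ Y) :
    E.TWeakEquiv T f ↔
      ∃ fbar : T.toFunctor.obj Y ⟶ T.toFunctor.obj X,
        T.μ.app Y ≫ fbar = T.toFunctor.map fbar ≫ T.μ.app X ∧
        E.HtpyStar (T.toFunctor.map f ≫ fbar) (𝟙 (T.toFunctor.obj X)) ∧
        E.HtpyStar (fbar ≫ T.toFunctor.map f) (𝟙 (T.toFunctor.obj Y)) := by
  refine ⟨fun hf => hf.exists_freeAlgebraHom_homotopyInverse hη, ?_⟩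
  rintro ⟨fbar, -, hleft, hright⟩
  rw [← ElementaryHomotopyData.tWeakEquiv_map_iff hη]
  exact fun A => ElementaryHomotopyData.bijective_precomp_of_htpyStar_id hleft hright

/-- Lemma: under (M1)-(M3), `f : X ⟶ Y` is a `T`-weak equivalence iff `Tf : TX ⟶ TY`
is a homotopy equivalence with a homotopy inverse `f̄ : TY ⟶ TX` which is a homomorphism
of free `T`-algebras. -/
theorem tWeakEquiv_iff_homotopyEquivalence {C : Type u} [SmallCategory C]
    (E : ElementaryHomotopyData C) (T : Monad (Psh C))
    (hM1a : ∀ ⦃K L : Psh C⦄ (j : K ⟶ L), CategoryTheory.Mono j →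
      CategoryTheory.Mono (T.toFunctor.map j))
    (hM1b : ∀ X : Psh C, CategoryTheory.Mono (T.η.app X))
    {ι : Type u} (G : ι → Psh C)
    (hM2 : ∀ X : Psh C, SaturatedClassGen.{u} (unitsOf T G) (T.η.app X))
    (hM3 : ∀ A : T.Algebra, E.NaivelyFibrant (unitsOf T G) A.A)
    {X Y : Psh C} (f : X ⟶ Y) :
    E.TWeakEquiv T f ↔
      ∃ fbar : T.toFunctor.obj Y ⟶ T.toFunctor.obj X,
        T.μ.app Y ≫ fbar = T.toFunctor.map fbar ≫ T.μ.app X ∧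
        E.HtpyStar (T.toFunctor.map f ≫ fbar) (𝟙 (T.toFunctor.obj X)) ∧
        E.HtpyStar (fbar ≫ T.toFunctor.map f) (𝟙 (T.toFunctor.obj Y)) := by
  exact tWeakEquiv_iff_homotopyEquivalence_general
    (fun Z A => (hM3 A).bijective_precomp (hM2 Z)) f

end PaperMSMonad
end

section
/- Let X be a set and let P_f(X) denote the set of pairs (S, σ) where S is a finite subset of X and σ : Fin |S| ≃ S is a bijection (|S| the cardinality of S). Then, in the arrow category of Set, the unit η_X : X → FreeMonoid X of the free monoid monad is a retract of the coproduct map ∐_{(S,σ)∈P_f(X)} η_{Fin |S|} : ∐_{(S,σ)} Fin |S| → ∐_{(S,σ)} FreeMonoid (Fin |S|); that is, there are maps s : X → ∐ Fin |S|, u : FreeMonoid X → ∐ FreeMonoid (Fin |S|), r : ∐ Fin |S| → X, and v : ∐ FreeMonoid (Fin |S|) → FreeMonoid X forming commuting squares with the two units such that r ∘ s = id_X and v ∘ u = id_{FreeMonoid X}. -/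
/-- The set `P_f(X)` of pairs `(S, σ)` where `S` is a finite subset of `X` and
`σ : Fin |S| ≃ S` is a bijection. -/
def FinSubsetEnum (X : Type) : Type :=
  Σ S : Finset X, Fin S.card ≃ {x : X // x ∈ S}

/-! A word `w` only involves the finite set `S` of its letters. Having chosen an enumeration of
every finite subset of `X`, one can spell `w` in the letters `Fin |S|`, and substituting the
elements of `S` for their indices recovers `w`. The word consisting of the single letter `x` has
letter set `{x}`, so sending the letter `x` itself to the summand of `{x}` makes the square of units
commute. -/

namespace FinSubsetEnum

variable {X : Type}

/-- The enumeration `Fin |S| → X` underlying `(S, σ)`. -/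
def enum (p : FinSubsetEnum X) (i : Fin p.1.card) : X :=
  p.2 i

/-- The position of an element `x` of `S` in the enumeration `(S, σ)`. -/
def index (p : FinSubsetEnum X) (x : X) (hx : x ∈ p.1) : Fin p.1.card :=
  p.2.symm ⟨x, hx⟩

theorem enum_index (p : FinSubsetEnum X) (x : X) (hx : x ∈ p.1) : p.enum (p.index x hx) = x := by
  simp [enum, index]

/-- The spelling, in the alphabet `Fin |S|`, of a word whose letters lie in `S`. -/
def indexWord (p : FinSubsetEnum X) (w : FreeMonoid X) (hw : ∀ x ∈ w, x ∈ p.1) :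
    FreeMonoid (Fin p.1.card) :=
  FreeMonoid.ofList (w.toList.pmap p.index hw)

theorem indexWord_of (p : FinSubsetEnum X) (x : X) (hx : ∀ y ∈ FreeMonoid.of x, y ∈ p.1) :
    p.indexWord (FreeMonoid.of x) hx =
      FreeMonoid.of (p.index x (hx x FreeMonoid.mem_of_self)) :=
  rfl

theorem map_enum_indexWord (p : FinSubsetEnum X) (w : FreeMonoid X) (hw : ∀ x ∈ w, x ∈ p.1) :
    FreeMonoid.map p.enum (p.indexWord w hw) = w :=
  (List.map_pmap hw).trans (List.pmap_eq_self.mpr fun x hx => p.enum_index x (hw x hx))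

/-- A chosen enumeration of the finite subset `S`. -/
noncomputable def ofFinset (S : Finset X) : FinSubsetEnum X :=
  ⟨S, S.equivFin.symm⟩

/-- The map `s : X → ∐ Fin |S|`, placing `x` in the summand of `{x}`. -/
noncomputable def letterSection (x : X) : Σ p : FinSubsetEnum X, Fin p.1.card :=
  ⟨ofFinset {x}, (ofFinset {x}).index x (Finset.mem_singleton_self x)⟩

open scoped Classical in
/-- The map `u : FreeMonoid X → ∐ FreeMonoid (Fin |S|)`, placing `w` in the summand of its set of
letters. -/
noncomputable def wordSection (w : FreeMonoid X) :
    Σ p : FinSubsetEnum X, FreeMonoid (Fin p.1.card) :=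
  ⟨ofFinset w.symbols, (ofFinset w.symbols).indexWord w fun _ => FreeMonoid.mem_symbols.mpr⟩

theorem wordSection_of (x : X) :
    wordSection (FreeMonoid.of x) =
      ⟨(letterSection x).1, FreeMonoid.of (letterSection x).2⟩ := by
  simp only [wordSection, FreeMonoid.symbols_of]
  exact congrArg (Sigma.mk (ofFinset {x})) (indexWord_of _ x _)

end FinSubsetEnum

/-- The unit `η_X : X → FreeMonoid X` of the free monoid monad is a retract, in the arrow
category of `Set`, of the coproduct `∐_{(S,σ) ∈ P_f(X)} η_{Fin |S|}`. -/
theorem freeMonoid_unit_retract_of_coprod_of_fin_units (X : Type) :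
    ∃ (s : X → Σ p : FinSubsetEnum X, Fin p.1.card)
      (u : FreeMonoid X → Σ p : FinSubsetEnum X, FreeMonoid (Fin p.1.card))
      (r : (Σ p : FinSubsetEnum X, Fin p.1.card) → X)
      (v : (Σ p : FinSubsetEnum X, FreeMonoid (Fin p.1.card)) → FreeMonoid X),
      -- `(s, u)` is a morphism of arrows `η_X ⟶ ∐ η_{Fin |S|}`
      (∀ x : X, u (FreeMonoid.of x) = ⟨(s x).1, FreeMonoid.of (s x).2⟩) ∧
      -- `(r, v)` is a morphism of arrows `∐ η_{Fin |S|} ⟶ η_X`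
      (∀ q : Σ p : FinSubsetEnum X, Fin p.1.card,
        v ⟨q.1, FreeMonoid.of q.2⟩ = FreeMonoid.of (r q)) ∧
      -- the composite is the identity on `η_X`
      r ∘ s = id ∧ v ∘ u = id := by
  refine ⟨FinSubsetEnum.letterSection, FinSubsetEnum.wordSection, fun q => q.1.enum q.2,
    fun q => FreeMonoid.map q.1.enum q.2, FinSubsetEnum.wordSection_of, ?_, ?_, ?_⟩
  · exact fun q => FreeMonoid.map_of q.1.enum q.2
  · exact funext fun x => FinSubsetEnum.enum_index _ x _
  · exact funext fun w => FinSubsetEnum.map_enum_indexWord _ w _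
end
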